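/- Let Ω ⊂ ℝ^d be a bounded measurable set, let V : ℝ^d → ℝ^d be continuously differentiable with bounded derivative (hence Lipschitz), and let F : ℝ × ℝ^d → ℝ be continuously differentiable with F and its total derivative bounded. For t ∈ ℝ define T_t(x) = x + t·V(x), and define the material derivative Ḟ : ℝ^d → ℝ by Ḟ(x) = ∂_t F(0,x) + ⟨V(x), ∇_x F(0,x)⟩. Then the function t ↦ ∫_{T_t(Ω)} F(t,x) dx has derivative at t = 0 equal to ∫_Ω ( Ḟ(x) + F(0,x)·div V(x) ) dx, where div V(x) is the trace of the Jacobian matrix of V at x. -/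

import Mathlib

open MeasureTheory RealInnerProductSpace

lemma aux_contDiff_det (d : ℕ) :
    ContDiff ℝ 1 (fun A : EuclideanSpace ℝ (Fin d) →L[ℝ] EuclideanSpace ℝ (Fin d) => A.det) := by
  let b := (EuclideanSpace.basisFun (Fin d) ℝ).toBasis
  have h : (fun A : EuclideanSpace ℝ (Fin d) →L[ℝ] EuclideanSpace ℝ (Fin d) => A.det)
      = fun A => ∑ σ : Equiv.Perm (Fin d), (Equiv.Perm.sign σ : ℤ) •
        ∏ i, (A (b i)) (σ i) := by
    ext A
    rw [ContinuousLinearMap.det, ← LinearMap.det_toMatrix b, Matrix.det_apply]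
    simp [b, LinearMap.toMatrix_apply, Units.smul_def]
  rw [h]
  refine ContDiff.sum fun σ _ => ContDiff.const_smul _ ?_
  refine contDiff_prod fun i _ => ?_
  have : ContDiff ℝ 1 (fun A : EuclideanSpace ℝ (Fin d) →L[ℝ] EuclideanSpace ℝ (Fin d) => A (b i)) :=
    contDiff_id.clm_apply contDiff_const
  exact (contDiff_euclidean.1 this) (σ i)

lemma aux_deriv_det (d : ℕ) (A : EuclideanSpace ℝ (Fin d) →L[ℝ] EuclideanSpace ℝ (Fin d)) :
    HasDerivAt (fun t : ℝ => (1 + t • A).det)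
      (LinearMap.trace ℝ (EuclideanSpace ℝ (Fin d)) A.toLinearMap) 0 := by
  let b := (EuclideanSpace.basisFun (Fin d) ℝ).toBasis
  let M := LinearMap.toMatrix b b A.toLinearMap
  have h : (fun t : ℝ => (1 + t • A).det)
      = fun t => ((1 + (Polynomial.X : Polynomial ℝ) • M.map Polynomial.C).det).eval t := by
    ext t
    have h1 : LinearMap.toMatrix b b (1 + t • A).toLinearMap = 1 + t • M := by
      have : (1 + t • A).toLinearMap = LinearMap.id + t • A.toLinearMap := rfl
      rw [this, map_add, map_smul, LinearMap.toMatrix_id]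
    rw [ContinuousLinearMap.det, ← LinearMap.det_toMatrix b, h1, ← Polynomial.coe_evalRingHom,
      RingHom.map_det]
    congr 1
    ext i j
    simp [Matrix.one_apply]
    split_ifs <;> simp [mul_comm]
  rw [h]
  have := Polynomial.hasDerivAt ((1 + (Polynomial.X : Polynomial ℝ) • M.map Polynomial.C).det) 0
  rw [Matrix.derivative_det_one_add_X_smul] at this
  rwa [LinearMap.trace_eq_matrix_trace ℝ b]

/-- Formula (4.6a): the derivative at `t = 0` of `t ↦ ∫_{T_t(Ω)} F(t,·)`, where
`T_t = id + tV`, equals `∫_Ω (Ḟ + F(0,·) · div V)`, with material derivative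
`Ḟ(x) = ∂ₜF(0,x) + ⟨V(x), ∇ₓF(0,x)⟩`. -/
theorem stmt_2 (d : ℕ) (Ω : Set (EuclideanSpace ℝ (Fin d)))
    (hΩm : MeasurableSet Ω) (hΩb : Bornology.IsBounded Ω)
    (V : EuclideanSpace ℝ (Fin d) → EuclideanSpace ℝ (Fin d))
    (hV : ContDiff ℝ 1 V) (CV : ℝ) (hVb : ∀ x, ‖fderiv ℝ V x‖ ≤ CV)
    (F : ℝ × EuclideanSpace ℝ (Fin d) → ℝ) (hF : ContDiff ℝ 1 F)
    (CF : ℝ) (hFb : ∀ p, |F p| ≤ CF)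
    (CdF : ℝ) (hdFb : ∀ p, ‖fderiv ℝ F p‖ ≤ CdF) :
    HasDerivAt (fun t : ℝ => ∫ x in (fun x => x + t • V x) '' Ω, F (t, x))
      (∫ x in Ω,
        ((deriv (fun s : ℝ => F (s, x)) 0 + ⟪V x, gradient (fun y => F (0, y)) x⟫) +
          F (0, x) * LinearMap.trace ℝ (EuclideanSpace ℝ (Fin d)) (fderiv ℝ V x).toLinearMap))
      0 := by
  have hCV : 0 ≤ CV := (norm_nonneg _).trans (hVb 0)
  have hVd : Differentiable ℝ V := hV.differentiable one_ne_zero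
  have hFd : Differentiable ℝ F := hF.differentiable one_ne_zero
  have hdV : Continuous (fderiv ℝ V) := hV.continuous_fderiv one_ne_zero
  have hdF : Continuous (fderiv ℝ F) := hF.continuous_fderiv one_ne_zero
  have hVc := hV.continuous
  have hFc := hF.continuous
  have hdetC := aux_contDiff_det d
  have hdetc := hdetC.continuous
  let det' := fderiv ℝ (fun A : EuclideanSpace ℝ (Fin d) →L[ℝ] EuclideanSpace ℝ (Fin d) => A.det)
  have hdet'c : Continuous det' := hdetC.continuous_fderiv one_ne_zero
  let G : ℝ → EuclideanSpace ℝ (Fin d) → ℝ := fun t x =>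
    (1 + t • fderiv ℝ V x).det * F (t, x + t • V x)
  let G' : ℝ → EuclideanSpace ℝ (Fin d) → ℝ := fun t x =>
    det' (1 + t • fderiv ℝ V x) (fderiv ℝ V x) * F (t, x + t • V x) +
    (1 + t • fderiv ℝ V x).det * fderiv ℝ F (t, x + t • V x) (1, V x)
  have hGc : Continuous (Function.uncurry G) := by
    have : Continuous (fun p : ℝ × EuclideanSpace ℝ (Fin d) => (1 + p.1 • fderiv ℝ V p.2).det) :=
      hdetc.comp (by fun_prop)
    exact this.mul (by fun_prop)
  have hG'c : Continuous (Function.uncurry G') := by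
    have : Continuous (fun p : ℝ × EuclideanSpace ℝ (Fin d) => (1 + p.1 • fderiv ℝ V p.2).det) :=
      hdetc.comp (by fun_prop)
    refine Continuous.add (Continuous.mul ?_ (by fun_prop)) (this.mul ?_)
    · exact Continuous.clm_apply (hdet'c.comp (by fun_prop)) (by fun_prop)
    · exact Continuous.clm_apply (hdF.comp (by fun_prop)) (by fun_prop)
  have hdetd : ∀ t x, HasDerivAt (fun s : ℝ => (1 + s • fderiv ℝ V x).det)
      (det' (1 + t • fderiv ℝ V x) (fderiv ℝ V x)) t := by
    intro t x
    have h1 : HasDerivAt (fun s : ℝ => 1 + s • fderiv ℝ V x) (fderiv ℝ V x) t := by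
      simpa using ((hasDerivAt_id t).smul_const (fderiv ℝ V x)).const_add 1
    exact ((hdetC.differentiable one_ne_zero) _).hasFDerivAt.comp_hasDerivAt t h1
  have hGd : ∀ t x, HasDerivAt (fun s => G s x) (G' t x) t := by
    intro t x
    refine (hdetd t x).mul ?_
    have h1 : HasDerivAt (fun s : ℝ => (s, x + s • V x)) (1, V x) t := by
      refine (hasDerivAt_id t).prodMk ?_
      simpa using ((hasDerivAt_id t).smul_const (V x)).const_add x
    exact (hFd _).hasFDerivAt.comp_hasDerivAt t h1
  have hK : IsCompact (closure Ω) := hΩb.isCompact_closure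
  have hfin : volume Ω ≠ ⊤ := hΩb.measure_lt_top.ne
  have : IsFiniteMeasure (volume.restrict Ω) := ⟨by simpa using hfin.lt_top⟩
  obtain ⟨C, hC⟩ := ((isCompact_Icc (a := (-1:ℝ)) (b := 1)).prod hK).exists_bound_of_continuousOn
    hG'c.continuousOn
  have key : HasDerivAt (fun t => ∫ x in Ω, G t x) (∫ x in Ω, G' 0 x) 0 := by
    refine (hasDerivAt_integral_of_dominated_loc_of_deriv_le (bound := fun _ => C)
      (Icc_mem_nhds (by norm_num : (-1:ℝ) < 0) (by norm_num : (0:ℝ) < 1)) ?_ ?_ ?_ ?_ ?_ ?_).2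
    · exact Filter.Eventually.of_forall fun t =>
        (hGc.comp (Continuous.prodMk_right t)).aestronglyMeasurable
    · exact ((hGc.comp (Continuous.prodMk_right 0)).continuousOn.integrableOn_compact hK).mono_set
        subset_closure
    · exact (hG'c.comp (Continuous.prodMk_right 0)).aestronglyMeasurable
    · filter_upwards [ae_restrict_mem hΩm] with x hx t ht
      exact hC (t, x) ⟨ht, subset_closure hx⟩
    · exact integrable_const C
    · exact Filter.Eventually.of_forall fun x t _ => hGd t x
  have hev : (fun t : ℝ => ∫ x in (fun x => x + t • V x) '' Ω, F (t, x))
      =ᶠ[nhds 0] (fun t => ∫ x in Ω, G t x) := by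
    have hpos : ∀ᶠ B in nhds (1 : EuclideanSpace ℝ (Fin d) →L[ℝ] EuclideanSpace ℝ (Fin d)),
        0 < B.det := by
      refine hdetc.continuousAt.eventually_const_lt ?_
      simp [ContinuousLinearMap.det]
    obtain ⟨δ, hδ, hball⟩ := Metric.eventually_nhds_iff.1 hpos
    have ht : ∀ᶠ t : ℝ in nhds 0, |t| * CV < min δ 1 := by
      have : Continuous fun t : ℝ => |t| * CV := by fun_prop
      exact this.continuousAt.eventually_lt_const (by simp [hδ])
    filter_upwards [ht] with t ht
    have hinj : Set.InjOn (fun x => x + t • V x) Ω := by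
      intro x _ y _ hxy
      by_contra hne
      have h1 : ‖V y - V x‖ ≤ CV * ‖y - x‖ :=
        Convex.norm_image_sub_le_of_norm_fderiv_le (fun z _ => hVd z) (fun z _ => hVb z)
          convex_univ (Set.mem_univ x) (Set.mem_univ y)
      have h2 : x - y = t • (V y - V x) := by
        rw [smul_sub, sub_eq_sub_iff_add_eq_add, add_comm (t • V y)]
        exact hxy
      have h3 : ‖y - x‖ = |t| * ‖V y - V x‖ := by
        rw [norm_sub_rev, h2, norm_smul, Real.norm_eq_abs]
      have h4 : 0 < ‖y - x‖ := norm_pos_iff.2 (sub_ne_zero.2 (Ne.symm hne))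
      have h5 := lt_of_lt_of_le ht (min_le_right _ _)
      have h6 := mul_le_mul_of_nonneg_left h1 (abs_nonneg t)
      nlinarith
    have hder : ∀ x ∈ Ω, HasFDerivWithinAt (fun x => x + t • V x) (1 + t • fderiv ℝ V x) Ω x := by
      intro x _
      exact ((hasFDerivAt_id x).add ((hVd x).hasFDerivAt.const_smul t)).hasFDerivWithinAt
    rw [integral_image_eq_integral_abs_det_fderiv_smul volume hΩm hder hinj]
    refine integral_congr_ae (Filter.Eventually.of_forall fun x => ?_)
    have : 0 < (1 + t • fderiv ℝ V x).det := by
      apply hball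
      rw [dist_eq_norm, add_sub_cancel_left, norm_smul, Real.norm_eq_abs]
      exact (mul_le_mul_of_nonneg_left (hVb x) (abs_nonneg t)).trans_lt
        (lt_of_lt_of_le ht (min_le_left _ _))
    simp only [abs_of_pos this, smul_eq_mul, G]
  refine HasDerivAt.congr_of_eventuallyEq ?_ hev
  refine key.congr_deriv (Eq.symm ?_)
  refine integral_congr_ae (Filter.Eventually.of_forall fun x => ?_)
  have e1 : det' (1 + (0:ℝ) • fderiv ℝ V x) (fderiv ℝ V x) =
      LinearMap.trace ℝ (EuclideanSpace ℝ (Fin d)) (fderiv ℝ V x).toLinearMap :=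
    (hdetd 0 x).unique (aux_deriv_det d _)
  have e2 : deriv (fun s : ℝ => F (s, x)) 0 = fderiv ℝ F (0, x) (1, 0) :=
    ((hFd _).hasFDerivAt.comp_hasDerivAt (0:ℝ)
      ((hasDerivAt_id (0:ℝ)).prodMk (hasDerivAt_const (0:ℝ) x))).deriv
  have e3 : ⟪V x, gradient (fun y => F (0, y)) x⟫ = fderiv ℝ F (0, x) (0, V x) := by
    have h : HasFDerivAt (fun y => F (0, y)) ((fderiv ℝ F (0, x)).comp
        (ContinuousLinearMap.inr ℝ ℝ (EuclideanSpace ℝ (Fin d)))) x :=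
      (hFd (0, x)).hasFDerivAt.comp x (hasFDerivAt_prodMk_right (0:ℝ) x)
    rw [gradient, h.fderiv, real_inner_comm, InnerProductSpace.toDual_symm_apply]
    simp
  have e4 : (1 + (0:ℝ) • fderiv ℝ V x).det = 1 := by
    have hz : 1 + (0:ℝ) • fderiv ℝ V x = 1 := by
      ext y i
      simp
    rw [hz]
    simp [ContinuousLinearMap.det]
  simp only [G', e1, e4]
  rw [e2, e3, ← map_add]
  simp only [zero_smul, add_zero, Prod.mk_add_mk, zero_add, one_mul]
  ring
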